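/- For all natural numbers n ≥ 1 and real parameters a, b, c, d (with all denominators nonzero), the Racah polynomials R_n(λ(x)) with λ(x) = x(x+c+d+1) satisfy λ(x)·R_n(λ(x)) = α_n·R_{n+1}(λ(x)) + β_n·R_n(λ(x)) + γ_n·R_{n-1}(λ(x)) for all real x, where α_n = (a+n+1)(c+n+1)(a+b+n+1)(d+b+n+1)/((a+b+2n+1)(a+b+2n+2)), γ_n = n(b+n)(a−d+n)(a+b−c+n)/((a+b+2n)(a+b+2n+1)), and β_n = (−4n² − 4(a+b+1)n + (a−2d−b−2−2c)(a−b))/8 − (c+1)(b+d+1)/2 − (a−b)(a+b)(a−2d−b)(a−2c+b)/(8(a+b+2n)(a+b+2n+2)). -/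

import Mathlib

/-- Rising factorial `(a)_k = a(a+1)⋯(a+k-1)`. -/
noncomputable def rf (a : ℝ) (k : ℕ) : ℝ := ∏ j ∈ Finset.range k, (a + j)

/-- The Racah polynomials `R_n(λ(x))` with `λ(x) = x(x+c+d+1)`:
`R_n(λ(x)) = ∑_{k=0}^n ((-n)_k (n+a+b+1)_k (-x)_k (x+c+d+1)_k) /
  ((a+1)_k (b+d+1)_k (c+1)_k k!)`. -/
noncomputable def racah (a b c d : ℝ) (n : ℕ) (x : ℝ) : ℝ :=
  ∑ k ∈ Finset.range (n + 1),
    rf (-(n : ℝ)) k * rf ((n : ℝ) + a + b + 1) k * rf (-x) k * rf (x + c + d + 1) k /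
      (rf (a + 1) k * rf (b + d + 1) k * rf (c + 1) k * (k.factorial : ℝ))

theorem rf_zero (a : ℝ) : rf a 0 = 1 := by simp [rf]

theorem rf_succ (a : ℝ) (k : ℕ) : rf a (k + 1) = rf a k * (a + k) := by
  simp [rf, Finset.prod_range_succ]

theorem rf_succ_left (a : ℝ) (k : ℕ) : rf a (k + 1) = a * rf (a + 1) k := by
  rw [rf, rf, Finset.prod_range_succ']
  rw [mul_comm]
  congr 1
  · simp
  · refine Finset.prod_congr rfl fun j _ => ?_
    push_cast
    ring

theorem rf_neg_natCast_eq_zero {n k : ℕ} (h : n < k) : rf (-(n : ℝ)) k = 0 :=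
  Finset.prod_eq_zero (Finset.mem_range.mpr h) (by ring)

/-- The `n`-dependent factor of the `k`-th summand of the Racah polynomial, with `s = a + b`. -/
noncomputable def racahCoeff (s n : ℝ) (k : ℕ) : ℝ := rf (-n) k * rf (n + s + 1) k

/-- The `n`-independent factor of the `k`-th summand of the Racah polynomial. -/
noncomputable def racahBasis (a b c d x : ℝ) (k : ℕ) : ℝ :=
  rf (-x) k * rf (x + c + d + 1) k /
    (rf (a + 1) k * rf (b + d + 1) k * rf (c + 1) k * (k.factorial : ℝ))

theorem racahCoeff_eq_zero (s : ℝ) {n k : ℕ} (h : n < k) : racahCoeff s n k = 0 := by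
  rw [racahCoeff, rf_neg_natCast_eq_zero h, zero_mul]

theorem racah_eq_sum (a b c d x : ℝ) {n N : ℕ} (h : n < N) :
    racah a b c d n x =
      ∑ k ∈ Finset.range N, racahCoeff (a + b) n k * racahBasis a b c d x k := by
  rw [← Finset.sum_subset (Finset.range_mono (Nat.succ_le_of_lt h))]
  · refine Finset.sum_congr rfl fun k _ => ?_
    rw [racahCoeff, racahBasis, ← add_assoc (n : ℝ) a b]
    ring
  · intro k _ hk
    rw [racahCoeff_eq_zero _ (by simpa using hk), zero_mul]

/-- Multiplication by `λ(x)` acts bidiagonally on the basis. -/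
theorem mul_racahBasis (a b c d x : ℝ) (k : ℕ) (ha : rf (a + 1) (k + 1) ≠ 0)
    (hbd : rf (b + d + 1) (k + 1) ≠ 0) (hc : rf (c + 1) (k + 1) ≠ 0) :
    x * (x + c + d + 1) * racahBasis a b c d x k =
      k * (k + c + d + 1) * racahBasis a b c d x k -
        (a + 1 + k) * (b + d + 1 + k) * (c + 1 + k) * (k + 1) *
          racahBasis a b c d x (k + 1) := by
  rw [rf_succ] at ha hbd hc
  obtain ⟨ha, ha'⟩ := mul_ne_zero_iff.mp ha
  obtain ⟨hbd, hbd'⟩ := mul_ne_zero_iff.mp hbd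
  obtain ⟨hc, hc'⟩ := mul_ne_zero_iff.mp hc
  have hk : (k.factorial : ℝ) ≠ 0 := by exact_mod_cast k.factorial_ne_zero
  have hk' : (k : ℝ) + 1 ≠ 0 := by positivity
  simp only [racahBasis, rf_succ, Nat.factorial_succ, Nat.cast_mul, Nat.cast_succ]
  generalize rf (a + 1) k = A at *
  generalize rf (b + d + 1) k = B at *
  generalize rf (c + 1) k = C at *
  generalize (k.factorial : ℝ) = F at *
  generalize rf (-x) k = X
  generalize rf (x + c + d + 1) k = Y
  have key : (a + 1 + k) * (b + d + 1 + k) * (c + 1 + k) * (k + 1) *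
      (X * (-x + k) * (Y * (x + c + d + 1 + k)) /
        (A * (a + 1 + k) * (B * (b + d + 1 + k)) * (C * (c + 1 + k)) * ((k + 1) * F))) =
      (-x + k) * (x + c + d + 1 + k) * (X * Y / (A * B * C * F)) := by
    field_simp
  rw [key]
  ring

/-- The right-hand side of the three-term recurrence, with `p`, `q`, `r` in place of
`R_{n+1}`, `R_n`, `R_{n-1}`. -/
noncomputable def racahRecurrence (a b c d n p q r : ℝ) : ℝ :=
  ((a + n + 1) * (c + n + 1) * (a + b + n + 1) * (d + b + n + 1) /
        ((a + b + 2 * n + 1) * (a + b + 2 * n + 2))) * p +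
    ((-4 * n ^ 2 - 4 * (a + b + 1) * n + (a - 2 * d - b - 2 - 2 * c) * (a - b)) / 8 -
        (c + 1) * (b + d + 1) / 2 -
        (a - b) * (a + b) * (a - 2 * d - b) * (a - 2 * c + b) /
          (8 * (a + b + 2 * n) * (a + b + 2 * n + 2))) * q +
    (n * (b + n) * (a - d + n) * (a + b - c + n) /
        ((a + b + 2 * n) * (a + b + 2 * n + 1))) * r

theorem racahRecurrence_coeff_zero {a b n : ℝ} (c d : ℝ) (h0 : a + b + 2 * n ≠ 0)
    (h1 : a + b + 2 * n + 1 ≠ 0) (h2 : a + b + 2 * n + 2 ≠ 0) :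
    racahRecurrence a b c d n (racahCoeff (a + b) (n + 1) 0) (racahCoeff (a + b) n 0)
      (racahCoeff (a + b) (n - 1) 0) = 0 := by
  simp only [racahRecurrence, racahCoeff, rf_zero]
  generalize hD2 : a + b + 2 * n + 2 = D2 at h2 ⊢
  generalize hD1 : a + b + 2 * n + 1 = D1 at h1 ⊢
  generalize hD0 : a + b + 2 * n = D0 at h0 ⊢
  field_simp
  subst hD0 hD1 hD2
  ring

theorem racahRecurrence_coeff_succ {a b n : ℝ} (c d : ℝ) (h0 : a + b + 2 * n ≠ 0)
    (h1 : a + b + 2 * n + 1 ≠ 0) (h2 : a + b + 2 * n + 2 ≠ 0)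
    (k : ℕ) :
    racahRecurrence a b c d n (racahCoeff (a + b) (n + 1) (k + 1))
      (racahCoeff (a + b) n (k + 1)) (racahCoeff (a + b) (n - 1) (k + 1)) =
    (k + 1) * (k + 1 + c + d + 1) * racahCoeff (a + b) n (k + 1) -
      (a + 1 + k) * (b + d + 1 + k) * (c + 1 + k) * (k + 1) * racahCoeff (a + b) n k := by
  cases k with
  | zero =>
    simp only [racahRecurrence, racahCoeff, rf_succ, rf_zero, Nat.cast_zero]
    generalize hD2 : a + b + 2 * n + 2 = D2 at h2 ⊢
    generalize hD1 : a + b + 2 * n + 1 = D1 at h1 ⊢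
    generalize hD0 : a + b + 2 * n = D0 at h0 ⊢
    field_simp
    subst hD0 hD1 hD2
    ring
  | succ k =>
    have e1 : rf (-(n + 1)) (k + 2) = (-(n + 1)) * (-n) * rf (-n + 1) k := by
      rw [rf_succ_left, rf_succ_left, show -(n + 1) + 1 = -n by ring]; ring
    have e2 : rf (-n) (k + 2) = (-n) * rf (-n + 1) k * (-n + 1 + k) := by
      rw [rf_succ_left, rf_succ]; ring
    have e3 : rf (-(n - 1)) (k + 2) = rf (-n + 1) k * (-n + 1 + k) * (-n + 2 + k) := by
      rw [rf_succ, rf_succ, show -(n - 1) = -n + 1 by ring]; push_cast; ring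
    have e4 : rf (-n) (k + 1) = (-n) * rf (-n + 1) k := rf_succ_left _ _
    have f1 : rf (n + 1 + (a + b) + 1) (k + 2) =
        rf (n + (a + b) + 2) k * (n + (a + b) + 2 + k) * (n + (a + b) + 3 + k) := by
      rw [rf_succ, rf_succ, show n + 1 + (a + b) + 1 = n + (a + b) + 2 by ring]
      push_cast; ring
    have f2 : rf (n + (a + b) + 1) (k + 2) =
        (n + (a + b) + 1) * rf (n + (a + b) + 2) k * (n + (a + b) + 2 + k) := by
      rw [rf_succ_left, rf_succ, show n + (a + b) + 1 + 1 = n + (a + b) + 2 by ring]; ring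
    have f3 : rf (n - 1 + (a + b) + 1) (k + 2) =
        (n + (a + b)) * (n + (a + b) + 1) * rf (n + (a + b) + 2) k := by
      rw [rf_succ_left, rf_succ_left,
        show n - 1 + (a + b) + 1 + 1 + 1 = n + (a + b) + 2 by ring]; ring
    have f4 : rf (n + (a + b) + 1) (k + 1) = (n + (a + b) + 1) * rf (n + (a + b) + 2) k := by
      rw [rf_succ_left, show n + (a + b) + 1 + 1 = n + (a + b) + 2 by ring]
    simp only [racahRecurrence, racahCoeff, add_assoc k 1 1, one_add_one_eq_two,
      e1, e2, e3, e4, f1, f2, f3, f4]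
    generalize rf (-n + 1) k = G
    generalize rf (n + (a + b) + 2) k = H
    push_cast
    generalize hD2 : a + b + 2 * n + 2 = D2 at h2 ⊢
    generalize hD1 : a + b + 2 * n + 1 = D1 at h1 ⊢
    generalize hD0 : a + b + 2 * n = D0 at h0 ⊢
    field_simp
    subst hD0 hD1 hD2
    ring

theorem racah_three_term (n : ℕ) (hn : 1 ≤ n) (a b c d x : ℝ)
    (ha : ∀ k ≤ n + 1, rf (a + 1) k ≠ 0)
    (hbd : ∀ k ≤ n + 1, rf (b + d + 1) k ≠ 0)
    (hc : ∀ k ≤ n + 1, rf (c + 1) k ≠ 0)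
    (h0 : a + b + 2 * n ≠ 0) (h1 : a + b + 2 * n + 1 ≠ 0) (h2 : a + b + 2 * n + 2 ≠ 0) :
    x * (x + c + d + 1) * racah a b c d n x =
      ((a + n + 1) * (c + n + 1) * (a + b + n + 1) * (d + b + n + 1) /
            ((a + b + 2 * n + 1) * (a + b + 2 * n + 2))) *
          racah a b c d (n + 1) x +
        ((-4 * n ^ 2 - 4 * (a + b + 1) * n + (a - 2 * d - b - 2 - 2 * c) * (a - b)) / 8 -
            (c + 1) * (b + d + 1) / 2 -
            (a - b) * (a + b) * (a - 2 * d - b) * (a - 2 * c + b) /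
              (8 * (a + b + 2 * n) * (a + b + 2 * n + 2))) *
          racah a b c d n x +
        ((n : ℝ) * (b + n) * (a - d + n) * (a + b - c + n) /
            ((a + b + 2 * n) * (a + b + 2 * n + 1))) *
          racah a b c d (n - 1) x := by
  change _ = racahRecurrence a b c d n _ _ _
  set e := racahBasis a b c d x
  have hn1 : ((n - 1 : ℕ) : ℝ) = n - 1 := by rw [Nat.cast_sub hn, Nat.cast_one]
  have hrec : racahRecurrence a b c d n (racah a b c d (n + 1) x) (racah a b c d n x)
      (racah a b c d (n - 1) x) =
      ∑ k ∈ Finset.range (n + 2), racahRecurrence a b c d n (racahCoeff (a + b) (n + 1) k)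
        (racahCoeff (a + b) n k) (racahCoeff (a + b) (n - 1) k) * e k := by
    rw [racah_eq_sum a b c d x (show n + 1 < n + 2 by omega),
      racah_eq_sum a b c d x (show n < n + 2 by omega),
      racah_eq_sum a b c d x (show n - 1 < n + 2 by omega), hn1, Nat.cast_succ]
    simp only [racahRecurrence, Finset.mul_sum, ← Finset.sum_add_distrib]
    exact Finset.sum_congr rfl fun k _ => by ring
  have hshift : ∑ k ∈ Finset.range (n + 1),
      ((k : ℝ) + 1) * (k + 1 + c + d + 1) * racahCoeff (a + b) n (k + 1) * e (k + 1) =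
      ∑ k ∈ Finset.range (n + 1), k * (k + c + d + 1) * racahCoeff (a + b) n k * e k := by
    have h := Finset.sum_range_succ'
      (fun k : ℕ => (k : ℝ) * (k + c + d + 1) * racahCoeff (a + b) n k * e k) (n + 1)
    rw [Finset.sum_range_succ, racahCoeff_eq_zero _ (Nat.lt_succ_self n)] at h
    simpa using h.symm
  rw [hrec, Finset.sum_range_succ', racahRecurrence_coeff_zero c d h0 h1 h2, zero_mul, add_zero]
  simp only [racahRecurrence_coeff_succ c d h0 h1 h2, sub_mul, Finset.sum_sub_distrib]
  rw [hshift, ← Finset.sum_sub_distrib, racah_eq_sum a b c d x n.lt_succ_self, Finset.mul_sum]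
  refine Finset.sum_congr rfl fun k hk => ?_
  have hk' : k + 1 ≤ n + 1 := Finset.mem_range.mp hk
  linear_combination racahCoeff (a + b) n k *
    mul_racahBasis a b c d x k (ha _ hk') (hbd _ hk') (hc _ hk')
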